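/- Let f : (C,P,∂) → (D,Q,∂') be a morphism of crossed modules with components f₁ : C → D, f₀ : P → Q, and let L' be a crossed D-algebra. Define the pullback f₀*(L') with graded pieces (f₀*L')_p = L'_{f₀(p)}, pairing inherited from L' on pieces of inverse grade (zero otherwise), action φ_h := φ'_{f₀(h)}, and c̃ := (f₁(c))~ placed in grade ∂c. Then f₀*(L') is a crossed C-algebra. -/

import Mathlib

/-- A crossed module structure: a group `P` acting on a group `C` (via `ψ : P →* MulAut C`)
together with a homomorphism `δ : C →* P` satisfying equivariance and the Peiffer identity. -/
structure IsCrossedModule {C P : Type*} [Group C] [Group P]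
    (ψ : P →* MulAut C) (δ : C →* P) : Prop where
  equivariance : ∀ (p : P) (c : C), δ (ψ p c) = p * δ c * p⁻¹
  peiffer : ∀ (c c' : C), ψ (δ c) c' = c * c' * c⁻¹

/-- A crossed `P`-algebra over a field `K`: a `P`-graded associative unital `K`-algebra with a
nondegenerate symmetric inner product and a `P`-action, satisfying Turaev's axioms. -/
structure CrossedPAlgebra (K : Type*) [Field K] (P : Type*) [Group P]
    (L : Type*) [Ring L] [Algebra K L] where
  grading : P → Submodule K L
  grading_indep : iSupIndep grading
  grading_supr : (⨆ p, grading p) = ⊤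
  mul_mem : ∀ (g h : P), ∀ a ∈ grading g, ∀ b ∈ grading h, a * b ∈ grading (g * h)
  one_mem : (1 : L) ∈ grading 1
  ρ : L →ₗ[K] L →ₗ[K] K
  ρ_symm : ∀ a b : L, ρ a b = ρ b a
  ρ_graded : ∀ (g h : P), g * h ≠ 1 → ∀ a ∈ grading g, ∀ b ∈ grading h, ρ a b = 0
  ρ_nondeg : ∀ (g : P), ∀ a ∈ grading g, (∀ b ∈ grading g⁻¹, ρ a b = 0) → a = 0
  ρ_mul_assoc : ∀ a b c : L, ρ (a * b) c = ρ a (b * c)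
  φ : P →* (L ≃ₐ[K] L)
  φ_grading : ∀ (g h : P), ∀ a ∈ grading h, φ g a ∈ grading (g * h * g⁻¹)
  φ_ρ : ∀ (g : P) (a b : L), ρ (φ g a) (φ g b) = ρ a b
  φ_fix : ∀ (g : P), ∀ a ∈ grading g, φ g a = a
  φ_comm : ∀ (g h : P), ∀ a ∈ grading g, ∀ b ∈ grading h, (φ h) a * b = b * a

/-- A crossed `𝒞`-algebra over a crossed module `(C, P, δ)` (with action `ψ`): a crossed
`P`-algebra together with distinguished elements `c̃ ∈ L_{δ c}` for `c ∈ C`. -/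
structure CrossedAlgebra (K : Type*) [Field K] {C P : Type*} [Group C] [Group P]
    (ψ : P →* MulAut C) (δ : C →* P) (L : Type*) [Ring L] [Algebra K L]
    extends CrossedPAlgebra K P L where
  tilde : C → L
  tilde_mem : ∀ c : C, tilde c ∈ grading (δ c)
  tilde_one : tilde 1 = 1
  tilde_mul : ∀ c c' : C, tilde (c * c') = tilde c * tilde c'
  φ_tilde : ∀ (h : P) (c : C), φ h (tilde c) = tilde (ψ h c)

open DirectSum

/-!
The inner product of the pullback comes from the linear form `ε x = ρ(x₁, 1)`, where `x₁` is the
component of grade `1`, by setting `⟨x, y⟩ = ε (x * y)`: on pieces of inverse grade this is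
`ρ(x * y, 1) = ρ(x, y)`, on all other pieces it vanishes, and its compatibility with the product
is associativity. Symmetry of `⟨·, ·⟩` and invariance of `ε` under `P` are checked on homogeneous
elements, where they are the corresponding axioms of the given algebra.
-/

section DirectSum

variable {R ι : Type*} [DecidableEq ι] [Semiring R]

theorem iSupIndep_range_lof (M : ι → Type*) [∀ i, AddCommMonoid (M i)] [∀ i, Module R (M i)] :
    iSupIndep fun i => LinearMap.range (lof R ι M i) := by
  refine iSupIndep_def.mpr fun i => ?_
  have h_others : ⨆ j, ⨆ (_ : j ≠ i), LinearMap.range (lof R ι M j) ≤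
      LinearMap.ker (component R ι M i) := by
    refine iSup₂_le fun j hji => ?_
    rintro _ ⟨x, rfl⟩
    exact of_eq_of_ne j i x hji.symm
  refine Disjoint.mono_right h_others (Submodule.disjoint_def.mpr ?_)
  rintro _ ⟨x, rfl⟩ hx
  rw [LinearMap.mem_ker, component.lof_self] at hx
  rw [hx, map_zero]

theorem lof_congr_of_coe_eq {M : Type*} [AddCommMonoid M] [Module R M] {N : ι → Submodule R M}
    {i j : ι} {x : N i} {y : N j} (hij : i = j) (hxy : (x : M) = y) :
    lof R ι (fun i => N i) i x = lof R ι (fun i => N i) j y :=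
  of_eq_of_gradedMonoid_eq (Sigma.subtype_ext hij hxy)

end DirectSum

namespace CrossedPAlgebra

variable {K : Type*} [Field K] {P Q : Type*} [Group P] [Group Q]
  {L : Type*} [Ring L] [Algebra K L]

section Grading

variable (A : CrossedPAlgebra K Q L) (f : P →* Q)

theorem one_mem_grading_map_one : (1 : L) ∈ A.grading (f 1) := by
  rw [map_one]
  exact A.one_mem

variable {f}

theorem mul_mem_grading_map_mul {p q : P} {x y : L} (hx : x ∈ A.grading (f p))
    (hy : y ∈ A.grading (f q)) : x * y ∈ A.grading (f (p * q)) := by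
  rw [map_mul]
  exact A.mul_mem _ _ x hx y hy

theorem φ_mem_grading_map_conj (h : P) {p : P} {x : L} (hx : x ∈ A.grading (f p)) :
    A.φ (f h) x ∈ A.grading (f (h * p * h⁻¹)) := by
  simpa only [map_mul, map_inv] using A.φ_grading (f h) (f p) x hx

variable (f)

/-- The family `p ↦ L_{f p}` of graded pieces of the pullback of `A` along `f`. It is indexed by
`Additive P` because Mathlib's graded rings are graded by additive monoids. -/
abbrev pullbackGrading : Additive P → Submodule K L :=
  fun a => A.grading (f a.toMul)

instance : SetLike.GradedMonoid (A.pullbackGrading f) where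
  one_mem := A.one_mem_grading_map_one f
  mul_mem _ _ _ _ hx hy := A.mul_mem_grading_map_mul hx hy

/-- The algebra underlying the pullback of `A` along `f`: the external direct sum of the pieces
`L_{f p}`, since pieces of different grades may be the same submodule of `L`. -/
abbrev Pullback : Type _ := ⨁ a, A.pullbackGrading f a

end Grading

namespace Pullback

section ActPiece

variable (A : CrossedPAlgebra K Q L) (f : P →* Q)

/-- The action `φ (f h)` of `A`, restricted to a map `L_{f p} → L_{f (h p h⁻¹)}`. -/
def actPiece (h p : P) : A.grading (f p) →ₗ[K] A.grading (f (h * p * h⁻¹)) :=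
  (A.φ (f h)).toLinearMap.restrict fun _ hx => A.φ_mem_grading_map_conj h hx

variable {A f}

theorem coe_actPiece (h p : P) (x : A.grading (f p)) : (actPiece A f h p x : L) = A.φ (f h) x :=
  rfl

end ActPiece

variable [DecidableEq (Additive P)]

section Pieces

variable (A : CrossedPAlgebra K Q L) (f : P →* Q)

/-- The inclusion of `L_{f p}` into the pullback as its piece of grade `p`. -/
def ofPiece (p : P) : A.grading (f p) →ₗ[K] A.Pullback f :=
  lof K (Additive P) (fun a => A.pullbackGrading f a) (Additive.ofMul p)

theorem iSupIndep_range_ofPiece : iSupIndep fun p => LinearMap.range (ofPiece A f p) :=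
  (iSupIndep_range_lof fun a => A.pullbackGrading f a).comp Additive.ofMul.injective

theorem iSup_range_ofPiece : ⨆ p, LinearMap.range (ofPiece A f p) = ⊤ :=
  (Additive.ofMul.iSup_comp
    (g := fun a => LinearMap.range (lof K _ (fun a => A.pullbackGrading f a) a))).trans
    DFinsupp.iSup_range_lsingle

theorem one_eq_ofPiece : (1 : A.Pullback f) = ofPiece A f 1 ⟨1, A.one_mem_grading_map_one f⟩ :=
  rfl

variable {A f}

theorem ofPiece_congr {p q : P} {x : A.grading (f p)} {y : A.grading (f q)} (hpq : p = q)
    (hxy : (x : L) = y) : ofPiece A f p x = ofPiece A f q y :=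
  lof_congr_of_coe_eq (congrArg Additive.ofMul hpq) hxy

theorem ofPiece_apply_self (p : P) (x : A.grading (f p)) :
    ofPiece A f p x (Additive.ofMul p) = x :=
  of_eq_same (β := fun a => A.pullbackGrading f a) (Additive.ofMul p) x

theorem ofPiece_apply_of_ne {p q : P} (hpq : p ≠ q) (x : A.grading (f p)) :
    ofPiece A f p x (Additive.ofMul q) = 0 :=
  of_eq_of_ne (β := fun a => A.pullbackGrading f a) _ _ x
    (Additive.ofMul.injective.ne hpq.symm)

theorem ofPiece_mul_ofPiece {p q : P} (x : A.grading (f p)) (y : A.grading (f q)) :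
    ofPiece A f p x * ofPiece A f q y = ofPiece A f (p * q)
      ⟨x * y, A.mul_mem_grading_map_mul x.2 y.2⟩ :=
  of_mul_of (A := fun a => A.pullbackGrading f a) x y

theorem linearMap_ext {N : Type*} [AddCommMonoid N] [Module K N] {F G : A.Pullback f →ₗ[K] N}
    (h : ∀ p x, F (ofPiece A f p x) = G (ofPiece A f p x)) : F = G :=
  DirectSum.linearMap_ext K fun a => LinearMap.ext (h a.toMul)

theorem algHom_ext {B : Type*} [Semiring B] [Algebra K B] {F G : A.Pullback f →ₐ[K] B}
    (h : ∀ p x, F (ofPiece A f p x) = G (ofPiece A f p x)) : F = G :=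
  AlgHom.toLinearMap_injective (linearMap_ext h)

end Pieces

section Action

variable {A : CrossedPAlgebra K Q L} {f : P →* Q}

theorem ofPiece_actPiece_one (h : P) :
    ofPiece A f (h * 1 * h⁻¹) (actPiece A f h 1 ⟨1, A.one_mem_grading_map_one f⟩) = 1 := by
  rw [one_eq_ofPiece]
  exact ofPiece_congr (by group) (map_one (A.φ (f h)))

theorem ofPiece_actPiece_mul (h : P) {p q : P} (x : A.grading (f p)) (y : A.grading (f q)) :
    ofPiece A f (h * (p * q) * h⁻¹)
        (actPiece A f h (p * q) ⟨x * y, A.mul_mem_grading_map_mul x.2 y.2⟩) =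
      ofPiece A f (h * p * h⁻¹) (actPiece A f h p x) *
        ofPiece A f (h * q * h⁻¹) (actPiece A f h q y) := by
  rw [ofPiece_mul_ofPiece]
  exact ofPiece_congr conj_mul.symm (map_mul (A.φ (f h)) (x : L) y)

variable (A f)

/-- The action of `h` on the pullback, carrying the piece of grade `p` to that of grade
`h * p * h⁻¹` by `φ (f h)`. -/
def actHom (h : P) : A.Pullback f →ₐ[K] A.Pullback f :=
  toAlgebra K (fun a => A.pullbackGrading f a)
    (fun a => ofPiece A f (h * a.toMul * h⁻¹) ∘ₗ actPiece A f h a.toMul)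
    (ofPiece_actPiece_one h) (ofPiece_actPiece_mul h)

variable {A f}

theorem actHom_ofPiece (h p : P) (x : A.grading (f p)) :
    actHom A f h (ofPiece A f p x) = ofPiece A f (h * p * h⁻¹) (actPiece A f h p x) :=
  toSemiring_of (A := fun a => A.pullbackGrading f a) _ (ofPiece_actPiece_one h)
    (ofPiece_actPiece_mul h) (Additive.ofMul p) x

variable (A f)

/-- The action of `P` on the pullback by algebra endomorphisms. -/
def act : P →* (A.Pullback f →ₐ[K] A.Pullback f) where
  toFun := actHom A f
  map_one' := algHom_ext fun p x => by
    rw [actHom_ofPiece]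
    exact ofPiece_congr (by group) (by rw [coe_actPiece, map_one, map_one, AlgEquiv.one_apply])
  map_mul' g h := algHom_ext fun p x => by
    rw [AlgHom.mul_apply, actHom_ofPiece, actHom_ofPiece, actHom_ofPiece]
    exact ofPiece_congr (by group) (by simp only [coe_actPiece, map_mul, AlgEquiv.mul_apply])

end Action

section Trace

variable (A : CrossedPAlgebra K Q L) (f : P →* Q)

/-- The Frobenius form `x ↦ ρ(x₁, 1)` of the pullback, where `x₁` is the component of grade `1`.
The inner product of the pullback is `(x, y) ↦ trace (x * y)`. -/
def trace : A.Pullback f →ₗ[K] K :=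
  A.ρ.flip 1 ∘ₗ (A.grading (f 1)).subtype ∘ₗ
    component K (Additive P) (fun a => A.pullbackGrading f a) (Additive.ofMul 1)

variable {A f}

theorem trace_ofPiece_of_eq_one {p : P} (hp : p = 1) (x : A.grading (f p)) :
    trace A f (ofPiece A f p x) = A.ρ x 1 := by
  subst hp
  exact congrArg (fun z : A.grading (f 1) => A.ρ z 1) (ofPiece_apply_self 1 x)

theorem trace_ofPiece_of_ne {p : P} (hp : p ≠ 1) (x : A.grading (f p)) :
    trace A f (ofPiece A f p x) = 0 := by
  have h_component : component K (Additive P) (fun a => A.pullbackGrading f a) (Additive.ofMul 1)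
      (ofPiece A f p x) = 0 := ofPiece_apply_of_ne hp x
  simp only [trace, LinearMap.comp_apply, h_component, map_zero]

theorem trace_ofPiece_mul_ofPiece {p q : P} (hpq : p * q = 1) (x : A.grading (f p))
    (y : A.grading (f q)) :
    trace A f (ofPiece A f p x * ofPiece A f q y) = A.ρ x y := by
  rw [ofPiece_mul_ofPiece, trace_ofPiece_of_eq_one hpq, A.ρ_mul_assoc, mul_one]

theorem trace_ofPiece_mul_ofPiece_of_ne {p q : P} (hpq : p * q ≠ 1) (x : A.grading (f p))
    (y : A.grading (f q)) : trace A f (ofPiece A f p x * ofPiece A f q y) = 0 := by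
  rw [ofPiece_mul_ofPiece, trace_ofPiece_of_ne hpq]

variable (A f)

/-- The inner product `(x, y) ↦ trace (x * y)` of the pullback. -/
def form : A.Pullback f →ₗ[K] A.Pullback f →ₗ[K] K :=
  (LinearMap.mul K (A.Pullback f)).compr₂ (trace A f)

variable {A f}

theorem form_comm (x y : A.Pullback f) : form A f x y = form A f y x := by
  suffices h : form A f = (form A f).flip from LinearMap.congr_fun₂ h x y
  refine linearMap_ext fun p x => linearMap_ext fun q y => ?_
  change trace A f (ofPiece A f p x * ofPiece A f q y) =
    trace A f (ofPiece A f q y * ofPiece A f p x)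
  by_cases hpq : p * q = 1
  · rw [trace_ofPiece_mul_ofPiece hpq, trace_ofPiece_mul_ofPiece (mul_eq_one_comm.mp hpq), A.ρ_symm]
  · rw [trace_ofPiece_mul_ofPiece_of_ne hpq,
      trace_ofPiece_mul_ofPiece_of_ne (mt mul_eq_one_comm.mp hpq)]

theorem trace_act (h : P) (x : A.Pullback f) : trace A f (act A f h x) = trace A f x := by
  suffices H : trace A f ∘ₗ (actHom A f h).toLinearMap = trace A f from LinearMap.congr_fun H x
  refine linearMap_ext fun p x => ?_
  rw [LinearMap.comp_apply, AlgHom.toLinearMap_apply, actHom_ofPiece]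
  by_cases hp : p = 1
  · rw [trace_ofPiece_of_eq_one hp, trace_ofPiece_of_eq_one (conj_eq_one_iff.mpr hp), coe_actPiece]
    simpa only [map_one] using A.φ_ρ (f h) x 1
  · rw [trace_ofPiece_of_ne hp, trace_ofPiece_of_ne (mt conj_eq_one_iff.mp hp)]

theorem form_act (h : P) (x y : A.Pullback f) :
    form A f (act A f h x) (act A f h y) = form A f x y := by
  change trace A f (act A f h x * act A f h y) = trace A f (x * y)
  rw [← map_mul, trace_act]

theorem eq_zero_of_form_ofPiece_eq_zero {p : P} (x : A.grading (f p))
    (h : ∀ y : A.grading (f p⁻¹), form A f (ofPiece A f p x) (ofPiece A f p⁻¹ y) = 0) : x = 0 := by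
  refine Subtype.ext (A.ρ_nondeg (f p) x x.2 fun y hy => ?_)
  rw [← map_inv] at hy
  exact (trace_ofPiece_mul_ofPiece (mul_inv_cancel p) x ⟨y, hy⟩).symm.trans (h ⟨y, hy⟩)

end Trace

end Pullback

open CrossedPAlgebra.Pullback

/-- The pullback of a crossed `Q`-algebra along a group homomorphism `f : P →* Q`, a crossed
`P`-algebra. -/
def pullback [DecidableEq (Additive P)] (A : CrossedPAlgebra K Q L) (f : P →* Q) :
    CrossedPAlgebra K P (A.Pullback f) where
  grading p := LinearMap.range (ofPiece A f p)
  grading_indep := iSupIndep_range_ofPiece A f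
  grading_supr := iSup_range_ofPiece A f
  mul_mem := by
    rintro g h _ ⟨x, rfl⟩ _ ⟨y, rfl⟩
    exact ⟨_, (ofPiece_mul_ofPiece x y).symm⟩
  one_mem := ⟨_, rfl⟩
  ρ := form A f
  ρ_symm := form_comm
  ρ_graded := by
    rintro g h hgh _ ⟨x, rfl⟩ _ ⟨y, rfl⟩
    exact trace_ofPiece_mul_ofPiece_of_ne hgh x y
  ρ_nondeg := by
    rintro g _ ⟨x, rfl⟩ h
    rw [eq_zero_of_form_ofPiece_eq_zero x fun y => h _ ⟨y, rfl⟩, map_zero]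
  ρ_mul_assoc x y z := congrArg (trace A f) (mul_assoc x y z)
  φ := (AlgEquiv.algHomUnitsEquiv K (A.Pullback f)).toMonoidHom.comp (act A f).toHomUnits
  φ_grading := by
    rintro g h _ ⟨x, rfl⟩
    exact ⟨_, (actHom_ofPiece g h x).symm⟩
  φ_ρ := form_act
  φ_fix := by
    rintro g _ ⟨x, rfl⟩
    exact (actHom_ofPiece g g x).trans (ofPiece_congr (mul_inv_cancel_right g g) (A.φ_fix _ x x.2))
  φ_comm := by
    rintro g h _ ⟨x, rfl⟩ _ ⟨y, rfl⟩
    change actHom A f h (ofPiece A f g x) * ofPiece A f h y = ofPiece A f h y * ofPiece A f g x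
    rw [actHom_ofPiece, ofPiece_mul_ofPiece, ofPiece_mul_ofPiece]
    exact ofPiece_congr (inv_mul_cancel_right (h * g) h) (A.φ_comm _ _ x x.2 y y.2)

end CrossedPAlgebra

section CrossedAlgebra

open CrossedPAlgebra.Pullback

variable {K : Type*} [Field K] {C P D Q : Type*} [Group C] [Group P] [Group D] [Group Q]
  [DecidableEq (Additive P)]
  {ψ : P →* MulAut C} {δ : C →* P} {ψ' : Q →* MulAut D} {δ' : D →* Q}
  {L' : Type*} [Ring L'] [Algebra K L']

/-- The pullback of a crossed algebra along a morphism `(f₁, f₀)` out of a precrossed module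
`(C, P, δ)`, whose equivariance is `hδ`. -/
def CrossedAlgebra.pullback (A' : CrossedAlgebra K ψ' δ' L') (f₁ : C →* D) (f₀ : P →* Q)
    (hδ : ∀ (p : P) (c : C), δ (ψ p c) = p * δ c * p⁻¹)
    (hsq : ∀ c : C, δ' (f₁ c) = f₀ (δ c))
    (hequiv : ∀ (p : P) (c : C), f₁ (ψ p c) = ψ' (f₀ p) (f₁ c)) :
    CrossedAlgebra K ψ δ (A'.Pullback f₀) where
  __ := A'.toCrossedPAlgebra.pullback f₀
  tilde c := ofPiece A'.toCrossedPAlgebra f₀ (δ c) ⟨A'.tilde (f₁ c), hsq c ▸ A'.tilde_mem (f₁ c)⟩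
  tilde_mem c := ⟨_, rfl⟩
  tilde_one := by
    rw [one_eq_ofPiece]
    exact ofPiece_congr (map_one δ) ((congrArg A'.tilde (map_one f₁)).trans A'.tilde_one)
  tilde_mul c c' := by
    rw [ofPiece_mul_ofPiece]
    exact ofPiece_congr (map_mul δ c c')
      ((congrArg A'.tilde (map_mul f₁ c c')).trans (A'.tilde_mul _ _))
  φ_tilde h c := (actHom_ofPiece h _ _).trans <| ofPiece_congr (hδ h c).symm <|
    (A'.φ_tilde (f₀ h) (f₁ c)).trans (congrArg A'.tilde (hequiv h c).symm)

theorem pullback_crossedAlgebra_general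
    (hδ : ∀ (p : P) (c : C), δ (ψ p c) = p * δ c * p⁻¹) (f₁ : C →* D) (f₀ : P →* Q)
    (hsq : ∀ c : C, δ' (f₁ c) = f₀ (δ c))
    (hequiv : ∀ (p : P) (c : C), f₁ (ψ p c) = ψ' (f₀ p) (f₁ c))
    (A' : CrossedAlgebra K ψ' δ' L') :
    ∃ A : CrossedAlgebra K ψ δ (A'.Pullback f₀),
      (∀ p, A.grading p = LinearMap.range (ofPiece A'.toCrossedPAlgebra f₀ p)) ∧
      (∀ p x y, A.ρ (ofPiece _ f₀ p x) (ofPiece _ f₀ p⁻¹ y) = A'.ρ x y) ∧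
      (∀ p r x y, r ≠ p⁻¹ → A.ρ (ofPiece _ f₀ p x) (ofPiece _ f₀ r y) = 0) ∧
      (∀ h p x, (A.φ h (ofPiece _ f₀ p x) (Additive.ofMul (h * p * h⁻¹)) : L') = A'.φ (f₀ h) x) ∧
      (∀ c, (A.tilde c (Additive.ofMul (δ c)) : L') = A'.tilde (f₁ c)) := by
  refine ⟨A'.pullback f₁ f₀ hδ hsq hequiv, fun _ => rfl, fun p x y => ?inv, fun p r x y hr => ?ne,
    fun h p x => ?act, fun c => ?tilde⟩
  case inv => exact trace_ofPiece_mul_ofPiece (mul_inv_cancel p) x y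
  case ne => exact trace_ofPiece_mul_ofPiece_of_ne (mt eq_inv_of_mul_eq_one_right hr) x y
  case act =>
    change (actHom _ f₀ h (ofPiece _ f₀ p x) (Additive.ofMul (h * p * h⁻¹)) : L') = _
    rw [actHom_ofPiece, ofPiece_apply_self]
    rfl
  case tilde => exact congrArg Subtype.val (ofPiece_apply_self (δ c) _)

end CrossedAlgebra

/-- given a morphism `f = (f₁, f₀)` of crossed modules from `(C,P,δ)` to
`(D,Q,δ')` and a crossed `𝒟`-algebra `L'`, the pullback `f₀*(L')` -- whose graded piece at
`p` is `L'_{f₀ p}`, with pairing inherited from `L'` on pieces of inverse grade (zero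
otherwise), action `φ_h := φ'_{f₀ h}` and `c̃ := (f₁ c)~` placed in grade `δ c` -- is a
crossed `𝒞`-algebra. -/
theorem pullback_crossedAlgebra {K : Type*} [Field K] {C P D Q : Type*}
    [Group C] [Group P] [Group D] [Group Q]
    {ψ : P →* MulAut C} {δ : C →* P} {ψ' : Q →* MulAut D} {δ' : D →* Q}
    (hC : IsCrossedModule ψ δ) (hD : IsCrossedModule ψ' δ')
    (f₁ : C →* D) (f₀ : P →* Q)
    (hsq : ∀ c : C, δ' (f₁ c) = f₀ (δ c))
    (hequiv : ∀ (p : P) (c : C), f₁ (ψ p c) = ψ' (f₀ p) (f₁ c))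
    {L' : Type*} [Ring L'] [Algebra K L'] (A' : CrossedAlgebra K ψ' δ' L') :
    letI : DecidableEq (Additive P) := Classical.decEq _
    letI : SetLike.GradedMonoid (fun a : Additive P => A'.grading (f₀ (Additive.toMul a))) :=
      { one_mem := by
          show (1 : L') ∈ A'.grading (f₀ (1 : P))
          rw [map_one]; exact A'.one_mem
        mul_mem := fun {i j} {gi gj} hi hj => by
          show gi * gj ∈ A'.grading (f₀ (Additive.toMul i * Additive.toMul j))
          rw [map_mul]; exact A'.mul_mem _ _ _ hi _ hj }
    ∃ A : CrossedAlgebra K ψ δ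
        (⨁ a : Additive P, A'.grading (f₀ (Additive.toMul a))),
      (∀ p : P, A.grading p =
        LinearMap.range (DirectSum.lof K (Additive P)
          (fun a => A'.grading (f₀ (Additive.toMul a))) (Additive.ofMul p))) ∧
      (∀ (p : P) (x : A'.grading (f₀ p)) (y : A'.grading (f₀ p⁻¹)),
        A.ρ (DirectSum.lof K (Additive P) (fun a => A'.grading (f₀ (Additive.toMul a)))
              (Additive.ofMul p) x)
            (DirectSum.lof K (Additive P) (fun a => A'.grading (f₀ (Additive.toMul a)))
              (Additive.ofMul p⁻¹) y) = A'.ρ (x : L') (y : L')) ∧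
      (∀ (p r : P) (x : A'.grading (f₀ p)) (y : A'.grading (f₀ r)), r ≠ p⁻¹ →
        A.ρ (DirectSum.lof K (Additive P) (fun a => A'.grading (f₀ (Additive.toMul a)))
              (Additive.ofMul p) x)
            (DirectSum.lof K (Additive P) (fun a => A'.grading (f₀ (Additive.toMul a)))
              (Additive.ofMul r) y) = 0) ∧
      (∀ (h p : P) (x : A'.grading (f₀ p)),
        ((A.φ h (DirectSum.lof K (Additive P) (fun a => A'.grading (f₀ (Additive.toMul a)))
              (Additive.ofMul p) x)) (Additive.ofMul (h * p * h⁻¹)) : L') =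
          A'.φ (f₀ h) (x : L')) ∧
      (∀ c : C,
        ((A.tilde c) (Additive.ofMul (δ c)) : L') = A'.tilde (f₁ c)) :=
  letI : DecidableEq (Additive P) := Classical.decEq _
  pullback_crossedAlgebra_general hC.equivariance f₁ f₀ hsq hequiv A'
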